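/- For every cycle-path graph G on n vertices having at least two branching cycle vertices, there exists a cycle-path graph G′ on n vertices with exactly one branching cycle vertex such that H_A(G) > H_A(G′). -/

import Mathlib

open Finset SimpleGraph

/-- Degree of a vertex (number of neighbors). -/
noncomputable def deg {V : Type*} [Fintype V] (G : SimpleGraph V) (v : V) : ℕ :=
  Nat.card {w // G.Adj v w}

open scoped Classical in
/-- Additively weighted Harary index: sum over unordered pairs of distinct
vertices of (deg u + deg v) / d(u,v). -/
noncomputable def HA {V : Type*} [Fintype V] (G : SimpleGraph V) : ℝ :=
  (1/2) * ∑ u : V, ∑ v : V, if u = v then 0 else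
    ((deg G u + deg G v : ℕ) : ℝ) / (G.dist u v)

/-- A unicyclic graph: connected with as many edges as vertices. -/
def Unicyclic {V : Type*} [Fintype V] (G : SimpleGraph V) : Prop :=
  G.Connected ∧ Nat.card G.edgeSet = Fintype.card V

/-- k-th harmonicNum number. -/
noncomputable def harmonicNum (k : ℕ) : ℝ := ∑ i ∈ Finset.range k, (1 : ℝ) / (i + 1)

/-- CS_{3,n-3}: a triangle on vertices 0,1,2 with n-3 leaves attached to vertex 0. -/
def cycleStar3 (n : ℕ) : SimpleGraph (Fin n) :=
  SimpleGraph.fromRel (fun i j => ((i : ℕ) < 3 ∧ (j : ℕ) < 3) ∨ ((i : ℕ) = 0 ∧ 3 ≤ (j : ℕ)))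

/-- CP_{k,n-k}: cycle 0,...,k-1 with the path k,k+1,...,n-1 attached to vertex 0
(for k = n this is just the cycle C_n). -/
def cyclePath (n k : ℕ) : SimpleGraph (Fin n) :=
  SimpleGraph.fromRel (fun i j =>
    ((i : ℕ) < k ∧ (j : ℕ) < k ∧ ((j : ℕ) = (i : ℕ) + 1 ∨ ((i : ℕ) = 0 ∧ (j : ℕ) = k - 1)))
    ∨ ((i : ℕ) = 0 ∧ (j : ℕ) = k)
    ∨ (k ≤ (i : ℕ) ∧ (j : ℕ) = (i : ℕ) + 1))

/-- A vertex lies on a cycle of G. -/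
def OnCycle {V : Type*} (G : SimpleGraph V) (v : V) : Prop :=
  ∃ p : G.Walk v v, p.IsCycle

/-- Cycle-star graph: unicyclic, and every vertex of degree ≥ 2 lies on the cycle
(equivalently, every non-cycle vertex is a leaf attached to a cycle vertex). -/
def IsCycleStar {V : Type*} [Fintype V] (G : SimpleGraph V) : Prop :=
  Unicyclic G ∧ ∀ v, 2 ≤ deg G v → OnCycle G v

/-- Cycle-path graph: unicyclic, cycle vertices have degree ≤ 3 and non-cycle
vertices have degree ≤ 2 (at most one pendant path per cycle vertex). -/
def IsCyclePath {V : Type*} [Fintype V] (G : SimpleGraph V) : Prop :=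
  Unicyclic G ∧ ∀ v, (OnCycle G v → deg G v ≤ 3) ∧ (¬ OnCycle G v → deg G v ≤ 2)

/-- Length of the unique cycle of a unicyclic graph: number of vertices on a cycle. -/
noncomputable def cycleLength {V : Type*} [Fintype V] (G : SimpleGraph V) : ℕ :=
  Nat.card {v // OnCycle G v}

/-- Value of H_A(CP_{3,n-3}). -/
noncomputable def CPval (n : ℕ) : ℝ :=
  4 * ∑ i ∈ Finset.range (n - 2), harmonicNum (n - i - 2)
    + harmonicNum (n - 3) + 3 * harmonicNum (n - 2) + (6 * (n : ℝ) - 13) / ((n : ℝ) - 2)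

/-!
The edges of a cycle-path graph are the pairs `{v, s v}`, where `s` rotates the cycle and descends
the pendant paths. Hence `∑ deg v * F v = ∑ (F v + F (s v))`, which turns the index into a plain sum
of values of an antitone weight `f` at distances. For a `k`-cycle with pendant paths of `a i`
vertices this sum splits into a constant, a term `∑_{m < a i} P m` for each path, where `P m` is the
gain from extending a path from `m` to `m + 1` vertices, and one interaction term for each pair of
paths.

Put `δ m = f (m + ⌊k/2⌋ + 1) + f (m + ⌊k/2⌋ + 2)`. Raising a vertex from height `m` to `m + 1` moves
it away from every cycle vertex, and telescoping along half of the cycle shows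
`P (m + 1) < P m + 2 δ m`. So stacking a path of `b` vertices onto one of `c` vertices costs less
than `2 ∑_{x < b, y < c} δ (x + y)`. Cycle vertices are at distance at most `⌊k/2⌋`, so this is at
most the interaction of the two paths, which the stacking eliminates. Moving all pendant paths onto
one cycle vertex therefore strictly decreases the index.
-/

section HarmonicWeight

variable {V : Type*} [Fintype V] {G : SimpleGraph V}

/-- The sum of `deg v * f (d(v, w))` over all ordered pairs `(v, w)`, the diagonal included. For
`f = invDist` it is the Harary index up to a constant. -/
noncomputable def degDistSum (f : ℕ → ℝ) (G : SimpleGraph V) : ℝ :=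
  ∑ w : V, ∑ v : V, deg G v * f (G.dist v w)

/-- The reciprocal of a distance, with the value `1` at `0`. Unlike `1 / d` it is antitone, and the
diagonal terms it adds to the Harary index depend only on the degree sum. -/
noncomputable def invDist (d : ℕ) : ℝ := 1 / (max 1 d : ℕ)

theorem invDist_antitone : Antitone invDist := fun m n hmn ↦
  one_div_le_one_div_of_le (by positivity) (by gcongr)

theorem invDist_add_two_lt (n : ℕ) : invDist (n + 2) < invDist (n + 1) :=
  one_div_lt_one_div_of_lt (by positivity) (by gcongr; omega)

theorem deg_eq_degree (G : SimpleGraph V) [DecidableRel G.Adj] (v : V) : deg G v = G.degree v := by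
  rw [deg, Nat.card_eq_fintype_card, ← G.card_neighborSet_eq_degree]
  rfl

theorem Unicyclic.sum_deg (hG : Unicyclic G) : ∑ v, deg G v = 2 * Fintype.card V := by
  classical
  simp only [deg_eq_degree, G.sum_degrees_eq_twice_card_edges]
  rw [← hG.2, Nat.card_eq_fintype_card, edgeFinset_card]

theorem Unicyclic.HA_eq (hG : Unicyclic G) :
    HA G = degDistSum invDist G - 2 * Fintype.card V := by
  classical
  have pair (u v : V) : (if u = v then 0 else ((deg G u + deg G v : ℕ) : ℝ) / G.dist u v) =
      deg G u * invDist (G.dist u v) + deg G v * invDist (G.dist v u)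
        - if u = v then 2 * (deg G u : ℝ) else 0 := by
    split_ifs with huv
    · simp [huv, invDist]
      ring
    · have hpos : 1 ≤ G.dist u v := hG.1.pos_dist_of_ne huv
      rw [G.dist_comm (u := v), invDist, max_eq_right hpos]
      push_cast
      ring
  have hdiag : ∑ v, 2 * (deg G v : ℝ) = 4 * Fintype.card V := by
    rw [← mul_sum, ← Nat.cast_sum, hG.sum_deg]
    push_cast
    ring
  have hcomm : ∑ u, ∑ v, deg G u * invDist (G.dist u v) = degDistSum invDist G := sum_comm
  have hcomm' : ∑ u, ∑ v, deg G v * invDist (G.dist v u) = degDistSum invDist G := rfl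
  simp only [HA, pair, sum_add_distrib, sum_sub_distrib, hcomm, hcomm', sum_ite_eq, mem_univ,
    if_true, hdiag]
  ring

end HarmonicWeight

section FunctionalGraph

/-- `G` is the undirected graph of the self-map `s`: its edges are the pairs `{v, s v}`, which are
pairwise distinct because `s` has no point of period at most two. The connected unicyclic graphs on
a finite set are of this form. -/
structure IsFunctionalGraph {V : Type*} (G : SimpleGraph V) (s : V → V) : Prop where
  adj_iff : ∀ u v, G.Adj u v ↔ s u = v ∨ s v = u
  apply_apply_ne : ∀ v, s (s v) ≠ v

variable {V W : Type*} {G : SimpleGraph V} {s : V → V}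

theorem isFunctionalGraph_of_card_edgeSet [Fintype V] (hadj : ∀ v, G.Adj v (s v))
    (hs : ∀ v, s (s v) ≠ v) (hcard : Nat.card G.edgeSet = Fintype.card V) :
    IsFunctionalGraph G s := by
  classical
  let edge (v : V) : G.edgeSet := ⟨s(v, s v), hadj v⟩
  have edge_injective : Function.Injective edge := by
    intro u v huv
    rcases Sym2.eq_iff.1 (congrArg Subtype.val huv) with ⟨h, -⟩ | ⟨hu, hv⟩
    · exact h
    · exact absurd (hu ▸ hv) (hs v)
  have edge_surjective : Function.Surjective edge :=
    (edge_injective.bijective_of_nat_card_le (by rw [hcard, Nat.card_eq_fintype_card])).2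
  refine ⟨fun u v ↦ ⟨fun huv ↦ ?_, ?_⟩, hs⟩
  · obtain ⟨w, hw⟩ := edge_surjective ⟨s(u, v), huv⟩
    rcases Sym2.eq_iff.1 (congrArg Subtype.val hw) with ⟨rfl, h⟩ | ⟨rfl, h⟩
    · exact .inl h
    · exact .inr h
  · rintro (rfl | rfl)
    · exact hadj u
    · exact (hadj v).symm

namespace IsFunctionalGraph

theorem adj_apply (hG : IsFunctionalGraph G s) (v : V) : G.Adj v (s v) :=
  (hG.adj_iff v (s v)).2 (.inl rfl)

theorem deg_eq [Fintype V] [DecidableEq V] (hG : IsFunctionalGraph G s) (v : V) :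
    deg G v = #{u | s u = v} + 1 := by
  have hmem : s v ∉ ({u | s u = v} : Finset V) := by simp [hG.apply_apply_ne v]
  rw [← card_insert_of_notMem hmem]
  refine Nat.subtype_card _ fun u ↦ ?_
  rw [mem_insert, mem_filter_univ, hG.adj_iff, eq_comm]

theorem sum_deg_mul [Fintype V] (hG : IsFunctionalGraph G s) (F : V → ℝ) :
    ∑ v, deg G v * F v = ∑ v, (F v + F (s v)) := by
  classical
  have hfiber (v : V) : ∑ u with s u = v, F (s u) = #{u | s u = v} * F v := by
    rw [sum_congr rfl fun u hu ↦ congrArg F (mem_filter.1 hu).2, sum_const, nsmul_eq_mul]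
  rw [sum_add_distrib, ← sum_fiberwise univ s fun u ↦ F (s u), ← sum_add_distrib]
  refine sum_congr rfl fun v _ ↦ ?_
  rw [hfiber, hG.deg_eq]
  push_cast
  ring

theorem unicyclic [Fintype V] (hG : IsFunctionalGraph G s) (hconn : G.Connected) :
    Unicyclic G := by
  classical
  have hsum : ∑ v, (deg G v : ℝ) = 2 * Fintype.card V := by
    simpa [two_mul, sum_add_distrib] using hG.sum_deg_mul fun _ ↦ 1
  have hedges : (∑ v, deg G v : ℕ) = 2 * #G.edgeFinset := by
    simp only [deg_eq_degree, G.sum_degrees_eq_twice_card_edges]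
  have : 2 * #G.edgeFinset = 2 * Fintype.card V := by rw [← hedges]; exact_mod_cast hsum
  refine ⟨hconn, ?_⟩
  rw [Nat.card_eq_fintype_card, ← edgeFinset_card]
  omega

/-- The isomorphism of functional graphs given by a bijection that conjugates their self-maps. -/
def isoOfSemiconj {H : SimpleGraph W} {t : W → W} (hG : IsFunctionalGraph G s)
    (hH : IsFunctionalGraph H t) (e : V ≃ W) (he : Function.Semiconj e s t) : G ≃g H where
  toEquiv := e
  map_rel_iff' {u v} := by
    rw [hG.adj_iff, hH.adj_iff, ← he, ← he, e.injective.eq_iff, e.injective.eq_iff]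

end IsFunctionalGraph

end FunctionalGraph

section Stacking

/-- The sum of `δ (x + y)` over the cells `(x, y)` of a `b × c` rectangle. Half the cost of stacking
a path of `b` vertices onto one of `c` vertices is bounded by such a sum. -/
def interaction (δ : ℕ → ℝ) (b c : ℕ) : ℝ :=
  ∑ x ∈ range b, ∑ y ∈ range c, δ (x + y)

variable {ι : Type*} {δ P : ℕ → ℝ} {A b : ℕ}

theorem interaction_comm (δ : ℕ → ℝ) (b c : ℕ) : interaction δ b c = interaction δ c b := by
  rw [interaction, sum_comm]
  simp only [interaction, add_comm]

theorem interaction_add_le (hδ : Antitone δ) (A b c : ℕ) :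
    interaction δ (A + b) c ≤ interaction δ A c + interaction δ b c := by
  rw [interaction, sum_range_add]
  refine add_le_add_right (sum_le_sum fun x _ ↦ sum_le_sum fun y _ ↦ hδ ?_) _
  omega

theorem interaction_sum_le (hδ : Antitone δ) (s : Finset ι) (a : ι → ℕ) (c : ℕ) :
    interaction δ (∑ i ∈ s, a i) c ≤ ∑ i ∈ s, interaction δ (a i) c := by
  classical
  induction s using Finset.induction_on with
  | empty => simp [interaction]
  | insert i s hi ih =>
    rw [sum_insert hi, sum_insert hi]
    exact (interaction_add_le hδ _ _ _).trans (add_le_add_right ih _)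

theorem apply_add_le_of_step (hP : ∀ j, P (j + 1) ≤ P j + 2 * δ j) (m b : ℕ) :
    P (m + b) ≤ P m + 2 * ∑ x ∈ range b, δ (m + x) := by
  induction b with
  | zero => simp
  | succ b ih =>
    rw [sum_range_succ, ← add_assoc]
    linarith [hP (m + b)]

theorem apply_add_lt_of_step (hP : ∀ j, P (j + 1) < P j + 2 * δ j) (m : ℕ) (hb : 0 < b) :
    P (m + b) < P m + 2 * ∑ x ∈ range b, δ (m + x) := by
  obtain ⟨b, rfl⟩ := Nat.exists_eq_add_one.2 hb
  rw [sum_range_succ, ← add_assoc]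
  linarith [hP (m + b), apply_add_le_of_step (fun j ↦ (hP j).le) m b]

theorem sum_range_add_le_of_step (hP : ∀ j, P (j + 1) ≤ P j + 2 * δ j) (A b : ℕ) :
    ∑ j ∈ range (A + b), P j ≤
      ∑ j ∈ range A, P j + ∑ j ∈ range b, P j + 2 * interaction δ b A := by
  rw [sum_range_add, interaction, mul_sum, add_assoc, ← sum_add_distrib]
  gcongr with m
  rw [add_comm A m]
  exact apply_add_le_of_step hP m A

theorem sum_range_add_lt_of_step (hP : ∀ j, P (j + 1) < P j + 2 * δ j) (hA : 0 < A)
    (hb : 0 < b) :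
    ∑ j ∈ range (A + b), P j <
      ∑ j ∈ range A, P j + ∑ j ∈ range b, P j + 2 * interaction δ b A := by
  rw [sum_range_add, interaction, mul_sum, add_assoc, ← sum_add_distrib]
  refine add_lt_add_right (sum_lt_sum_of_nonempty (nonempty_range_iff.2 hb.ne') fun m _ ↦ ?_) _
  rw [add_comm A m]
  exact apply_add_lt_of_step hP m hA

theorem sum_sum_eq_sum_diag_add_sum_offDiag [Fintype ι] (F : ι → ι → ℝ) :
    ∑ i, ∑ j, F i j = ∑ i, F i i + ∑ p ∈ (univ : Finset ι).offDiag, F p.1 p.2 := by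
  classical
  rw [← sum_product', ← diag_union_offDiag, sum_union (disjoint_diag_offDiag _), sum_diag]

theorem sum_offDiag_insert [DecidableEq ι] {s : Finset ι} {i : ι} (hi : i ∉ s)
    (F : ι × ι → ℝ) :
    ∑ p ∈ (insert i s).offDiag, F p =
      ∑ p ∈ s.offDiag, F p + ∑ j ∈ s, (F (i, j) + F (j, i)) := by
  rw [offDiag_insert hi, sum_union, sum_union, sum_product, sum_product, sum_singleton, add_assoc,
    ← sum_add_distrib]
  · simp only [sum_singleton]
  · simp only [Finset.disjoint_left, mem_offDiag, mem_product, mem_singleton]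
    grind
  · simp only [Finset.disjoint_left, mem_union, mem_offDiag, mem_product, mem_singleton]
    grind

theorem sum_range_sum_le_of_step (hδ : Antitone δ) (hP : ∀ j, P (j + 1) ≤ P j + 2 * δ j)
    (s : Finset ι) (a : ι → ℕ) :
    ∑ j ∈ range (∑ i ∈ s, a i), P j ≤ ∑ i ∈ s, ∑ j ∈ range (a i), P j +
      ∑ p ∈ s.offDiag, interaction δ (a p.1) (a p.2) := by
  classical
  induction s using Finset.induction_on with
  | empty => simp
  | insert i s hi ih =>
    have hcross := interaction_sum_le hδ s a (a i)
    have hstep := sum_range_add_le_of_step hP (∑ j ∈ s, a j) (a i)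
    rw [sum_offDiag_insert hi, sum_insert hi, sum_insert hi, add_comm (a i)]
    simp only [interaction_comm δ (a i), ← two_mul, ← mul_sum] at hstep ⊢
    linarith

theorem sum_range_sum_lt_of_step [Fintype ι] (hδ : Antitone δ)
    (hP : ∀ j, P (j + 1) < P j + 2 * δ j) {a : ι → ℕ} {p q : ι} (hpq : p ≠ q) (hp : 0 < a p)
    (hq : 0 < a q) :
    ∑ j ∈ range (∑ i, a i), P j < ∑ i, ∑ j ∈ range (a i), P j +
      ∑ r ∈ (univ : Finset ι).offDiag, interaction δ (a r.1) (a r.2) := by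
  classical
  have hpos : 0 < ∑ i ∈ univ.erase p, a i :=
    hq.trans_le (single_le_sum (fun _ _ ↦ Nat.zero_le _) (mem_erase.2 ⟨hpq.symm, mem_univ q⟩))
  have hrest := sum_range_sum_le_of_step hδ (fun j ↦ (hP j).le) (univ.erase p) a
  have hcross := interaction_sum_le hδ (univ.erase p) a (a p)
  have hstep := sum_range_add_lt_of_step hP hpos hp
  have hmem := notMem_erase p (univ : Finset ι)
  rw [← insert_erase (mem_univ p), sum_offDiag_insert hmem, sum_insert hmem, sum_insert hmem,
    add_comm (a p)]
  simp only [interaction_comm δ (a p), ← two_mul, ← mul_sum] at hstep ⊢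
  linarith

end Stacking

section CycleNorm

variable {k : ℕ}

/-- The distance from `0` to `z` along the cycle `ZMod k`. -/
def cycleNorm (z : ZMod k) : ℕ := z.valMinAbs.natAbs

@[simp]
theorem cycleNorm_eq_zero {z : ZMod k} : cycleNorm z = 0 ↔ z = 0 := by
  rw [cycleNorm, Int.natAbs_eq_zero, ZMod.valMinAbs_eq_zero]

theorem cycleNorm_neg (z : ZMod k) : cycleNorm (-z) = cycleNorm z := ZMod.natAbs_valMinAbs_neg z

theorem cycleNorm_sub_comm (x y : ZMod k) : cycleNorm (x - y) = cycleNorm (y - x) := by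
  rw [← cycleNorm_neg, neg_sub]

theorem cycleNorm_le_half [NeZero k] (z : ZMod k) : cycleNorm z ≤ k / 2 :=
  ZMod.natAbs_valMinAbs_le z

theorem cycleNorm_natCast {m : ℕ} (hm : m ≤ k / 2) : cycleNorm (m : ZMod k) = m := by
  rw [cycleNorm, ZMod.valMinAbs_natCast_of_le_half hm, Int.natAbs_natCast]

theorem cycleNorm_add_one_le (hk : 2 < k) (z : ZMod k) : cycleNorm (z + 1) ≤ cycleNorm z + 1 := by
  have hone : cycleNorm (1 : ZMod k) = 1 := by
    simpa using cycleNorm_natCast (k := k) (m := 1) (by omega)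
  calc cycleNorm (z + 1) ≤ (z.valMinAbs + (1 : ZMod k).valMinAbs).natAbs :=
        ZMod.natAbs_valMinAbs_add_le z 1
    _ ≤ cycleNorm z + cycleNorm (1 : ZMod k) := Int.natAbs_add_le _ _
    _ = cycleNorm z + 1 := by rw [hone]

theorem cycleNorm_le_add_one (hk : 2 < k) (z : ZMod k) : cycleNorm z ≤ cycleNorm (z + 1) + 1 := by
  have h := cycleNorm_add_one_le hk (-(z + 1))
  rwa [cycleNorm_neg, show -(z + 1) + 1 = -z by ring, cycleNorm_neg] at h

theorem exists_cycleNorm_add_one_eq [NeZero k] {z : ZMod k} (hz : z ≠ 0) :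
    cycleNorm (z + 1) + 1 = cycleNorm z ∨ cycleNorm (z - 1) + 1 = cycleNorm z := by
  have hle := cycleNorm_le_half z
  have hpos : cycleNorm z ≠ 0 := cycleNorm_eq_zero.not.2 hz
  have hcast : ((cycleNorm z - 1 : ℕ) : ZMod k) = cycleNorm z - 1 := by
    rw [Nat.cast_sub (by omega), Nat.cast_one]
  have hpred : cycleNorm ((cycleNorm z : ZMod k) - 1) = cycleNorm z - 1 := by
    rw [← hcast, cycleNorm_natCast (by omega)]
  have hsign : (cycleNorm z : ZMod k) = if z.val ≤ k / 2 then z else -z :=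
    ZMod.natCast_natAbs_valMinAbs z
  split_ifs at hsign
  · right
    rw [hsign] at hpred
    omega
  · left
    rw [hsign, ← neg_add', cycleNorm_neg] at hpred
    omega

end CycleNorm

section DistanceFunction

variable {V : Type*} {G : SimpleGraph V} {u : V} {f : V → ℕ}

theorem exists_walk_length_eq (hzero : ∀ v, f v = 0 → v = u)
    (hdesc : ∀ v, f v ≠ 0 → ∃ w, G.Adj v w ∧ f w + 1 = f v) (v : V) :
    ∃ p : G.Walk v u, p.length = f v := by
  induction hn : f v generalizing v with
  | zero =>
    obtain rfl := hzero v hn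
    exact ⟨.nil, rfl⟩
  | succ n ih =>
    obtain ⟨w, hvw, hw⟩ := hdesc v (by omega)
    obtain ⟨p, hp⟩ := ih w (by omega)
    exact ⟨.cons hvw p, by rw [Walk.length_cons, hp]⟩

theorem apply_le_length (hlip : ∀ v w, G.Adj v w → f v ≤ f w + 1) {v w : V} (p : G.Walk v w) :
    f v ≤ f w + p.length := by
  induction p with
  | nil => simp
  | cons h p ih =>
    rw [Walk.length_cons]
    have := hlip _ _ h
    omega

theorem dist_eq_of_lipschitz_of_descent (hzero : ∀ v, f v = 0 ↔ v = u)
    (hlip : ∀ v w, G.Adj v w → f v ≤ f w + 1)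
    (hdesc : ∀ v, f v ≠ 0 → ∃ w, G.Adj v w ∧ f w + 1 = f v) (v : V) : G.dist v u = f v := by
  obtain ⟨p, hp⟩ := exists_walk_length_eq (fun v ↦ (hzero v).1) hdesc v
  obtain ⟨q, hq⟩ := p.reachable.exists_walk_length_eq_dist
  have hle := apply_le_length hlip q
  rw [(hzero u).2 rfl] at hle
  have := dist_le p
  omega

theorem exists_height (hG : G.Connected) {C : Set V} (hC : C.Nonempty) :
    ∃ H : V → ℕ, (∀ v, H v = 0 ↔ v ∈ C) ∧ ∀ v, H v ≠ 0 → ∃ u, G.Adj v u ∧ H u + 1 = H v := by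
  have : Nonempty C := hC.to_subtype
  let H (v : V) : ℕ := ⨅ x : C, G.dist v x
  have attained (v : V) : ∃ x : C, G.dist v x = H v := ciInf_mem fun x : C ↦ G.dist v x
  have H_le (v : V) (x : C) : H v ≤ G.dist v x := ciInf_le (OrderBot.bddBelow _) x
  refine ⟨H, fun v ↦ ⟨fun hv ↦ ?_, fun hv ↦ ?_⟩, fun v hv ↦ ?_⟩
  · obtain ⟨x, hx⟩ := attained v
    rw [hv, hG.dist_eq_zero_iff] at hx
    exact hx ▸ x.2
  · simpa using H_le v ⟨v, hv⟩
  · obtain ⟨x, hx⟩ := attained v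
    obtain ⟨p, hp⟩ := hG.exists_walk_length_eq_dist v x
    cases p with
    | nil => exact absurd (by rw [← hx, dist_self]) hv
    | @cons _ u _ hvu p =>
      refine ⟨u, hvu, ?_⟩
      obtain ⟨y, hy⟩ := attained u
      have hle : H u ≤ p.length := (H_le u x).trans (dist_le p)
      have hge : H v ≤ 1 + H u := by
        rw [← hy, ← dist_eq_one_iff_adj.2 hvu]
        exact (H_le v y).trans hG.dist_triangle
      rw [Walk.length_cons] at hp
      omega

end DistanceFunction

section Cycle

variable {V : Type*} {G : SimpleGraph V} {k : ℕ} {c : ZMod k → V}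

theorem exists_injective_zmod_of_onCycle {v : V} (hv : OnCycle G v) :
    ∃ (k : ℕ) (c : ZMod k → V), 2 < k ∧ Function.Injective c ∧ ∀ i, G.Adj (c i) (c (i + 1)) := by
  obtain ⟨p, hp⟩ := hv
  obtain ⟨n, hn⟩ := Nat.exists_eq_add_of_le' hp.three_le_length
  obtain ⟨f⟩ := (cycleGraph_isContained_iff (G := G) (n := n + 3) (by omega)).2 ⟨v, p, hp, hn⟩
  refine ⟨n + 3, f, by omega, f.injective, fun i ↦ f.toHom.map_adj ?_⟩
  exact (cycleGraph_adj (n := n + 1)).2 (.inr (add_sub_cancel_left i 1))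

theorem onCycle_of_injective_zmod (hk : 2 < k) (hc : Function.Injective c)
    (hadj : ∀ i, G.Adj (c i) (c (i + 1))) (i : ZMod k) : OnCycle G (c i) := by
  obtain ⟨n, rfl⟩ := Nat.exists_eq_add_of_le' hk
  let f : cycleGraph (n + 3) →g G :=
    { toFun := fun j : ZMod (n + 3) ↦ c (i + j)
      map_rel' := fun {u v : ZMod (n + 3)} huv ↦ by
        rcases (cycleGraph_adj (n := n + 1)).1 huv with h | h
        · rw [← sub_add_cancel u v, show u - v = 1 from h, add_comm 1 v, ← add_assoc]
          exact (hadj _).symm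
        · rw [← sub_add_cancel v u, show v - u = 1 from h, add_comm 1 u, ← add_assoc]
          exact hadj _ }
  have hf : Function.Injective f := hc.comp (add_right_injective i)
  have h0 : f 0 = c i := congrArg c (add_zero i)
  exact h0 ▸ ⟨_, (Walk.isCycle_map_iff_of_injective hf).2 cycleGraph.isCycle_cycle⟩

end Cycle

section CycleRetraction

/-- The self-map `s` rotates the cycle `c` and moves each vertex off the cycle one step closer to
it; `H` counts the steps needed to reach the cycle. -/
structure CycleRetraction {V : Type*} {k : ℕ} (c : ZMod k → V) (s : V → V) (H : V → ℕ) : Prop where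
  injective : Function.Injective c
  apply_cycle : ∀ i, s (c i) = c (i + 1)
  height_eq_zero : ∀ v, H v = 0 ↔ v ∈ Set.range c
  height_apply : ∀ v, H v ≠ 0 → H (s v) + 1 = H v

namespace CycleRetraction

variable {V : Type*} {G : SimpleGraph V} {k : ℕ} {c : ZMod k → V} {s : V → V} {H : V → ℕ}

theorem height_cycle (h : CycleRetraction c s H) (i : ZMod k) : H (c i) = 0 :=
  (h.height_eq_zero _).2 ⟨i, rfl⟩

theorem apply_apply_ne (h : CycleRetraction c s H) (hk : 2 < k) (v : V) : s (s v) ≠ v := by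
  have htwo (i : ZMod k) : i + 1 + 1 ≠ i := by
    intro hi
    have : ((2 : ℕ) : ZMod k) = 0 := by linear_combination hi
    exact absurd (Nat.le_of_dvd two_pos ((ZMod.natCast_eq_zero_iff 2 k).1 this)) (by omega)
  intro hv
  by_cases hH : H v = 0
  · obtain ⟨i, rfl⟩ := (h.height_eq_zero v).1 hH
    rw [h.apply_cycle, h.apply_cycle] at hv
    exact htwo i (h.injective hv)
  · have hsv := h.height_apply v hH
    by_cases hs : H (s v) = 0
    · obtain ⟨i, hi⟩ := (h.height_eq_zero _).1 hs
      rw [← hi, h.apply_cycle] at hv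
      exact hH (hv ▸ h.height_cycle _)
    · have := h.height_apply _ hs
      rw [hv] at this
      omega

theorem height_apply_eq_zero (h : CycleRetraction c s H) {v : V} (hv : H v = 0) : H (s v) = 0 := by
  obtain ⟨i, rfl⟩ := (h.height_eq_zero v).1 hv
  rw [h.apply_cycle, h.height_cycle]

theorem onCycle_iff (h : CycleRetraction c s H) (hG : IsFunctionalGraph G s) (hk : 2 < k) (v : V) :
    OnCycle G v ↔ H v = 0 := by
  refine ⟨?_, fun hv ↦ ?_⟩
  · rintro ⟨p, hp⟩
    classical
    by_contra hv
    obtain ⟨x, hx, hmax⟩ := exists_max_image p.support.toFinset H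
      ⟨v, List.mem_toFinset.2 p.start_mem_support⟩
    have hHx : H x ≠ 0 := by
      have := hmax v (List.mem_toFinset.2 p.start_mem_support)
      omega
    have neighbor_eq : p.toSubgraph.neighborSet x ⊆ {s x} := by
      intro u hu
      rcases (hG.adj_iff x u).1 (p.toSubgraph.adj_sub hu) with hxu | hux
      · exact hxu.symm
      · have hu' := Walk.mem_support_of_adj_toSubgraph (p.toSubgraph.adj_symm hu)
        have hle := hmax u (List.mem_toFinset.2 hu')
        have hHu : H u ≠ 0 := fun h0 ↦ hHx (hux ▸ h.height_apply_eq_zero h0)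
        have := hux ▸ h.height_apply u hHu
        omega
    have htwo := hp.ncard_neighborSet_toSubgraph_eq_two (List.mem_toFinset.1 hx)
    have hone := Set.ncard_le_ncard neighbor_eq
    rw [Set.ncard_singleton] at hone
    omega
  · obtain ⟨i, rfl⟩ := (h.height_eq_zero v).1 hv
    exact onCycle_of_injective_zmod hk h.injective
      (fun j ↦ h.apply_cycle j ▸ hG.adj_apply (c j)) i

variable [Fintype V]

theorem deg_eq [DecidableEq V] (h : CycleRetraction c s H) (hG : IsFunctionalGraph G s) (v : V) :
    deg G v = (if H v = 0 then 2 else 1) + #{u | H u ≠ 0 ∧ s u = v} := by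
  have hcycle : #{u | H u = 0 ∧ s u = v} = if H v = 0 then 1 else 0 := by
    split_ifs with hv
    · obtain ⟨i, rfl⟩ := (h.height_eq_zero v).1 hv
      refine card_eq_one.2 ⟨c (i - 1), ?_⟩
      ext u
      rw [mem_filter_univ, mem_singleton]
      constructor
      · rintro ⟨hu, hui⟩
        obtain ⟨j, rfl⟩ := (h.height_eq_zero u).1 hu
        rw [h.apply_cycle] at hui
        rw [← h.injective hui, add_sub_cancel_right]
      · rintro rfl
        rw [h.apply_cycle, sub_add_cancel]
        exact ⟨h.height_cycle _, rfl⟩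
    · refine card_eq_zero.2 (filter_eq_empty_iff.2 ?_)
      rintro u - ⟨hu, rfl⟩
      exact hv (h.height_apply_eq_zero hu)
  have hsplit := card_filter_add_card_filter_not (s := {u | s u = v}) (H · = 0)
  simp only [filter_filter, and_comm (a := s _ = v), ← ne_eq] at hsplit
  rw [hG.deg_eq, ← hsplit, hcycle]
  split_ifs <;> omega

theorem isCyclePath_iff [DecidableEq V] (h : CycleRetraction c s H) (hG : IsFunctionalGraph G s)
    (hk : 2 < k) :
    IsCyclePath G ↔ Unicyclic G ∧ ∀ v, #{u | H u ≠ 0 ∧ s u = v} ≤ 1 := by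
  refine and_congr_right fun _ ↦ forall_congr' fun v ↦ ?_
  rw [h.onCycle_iff hG hk, h.deg_eq hG]
  split_ifs with hv
  · simp only [hv, true_imp_iff, not_true, false_imp_iff, and_true]
    omega
  · simp only [hv, false_imp_iff, true_and, not_false_eq_true, true_imp_iff]
    omega

end CycleRetraction

end CycleRetraction

section Model

variable {k : ℕ}

/-- The vertices of a `k`-cycle with a path of `a i` further vertices attached to its `i`-th vertex
for each `i`: the vertex `⟨i, x⟩` has distance `x` from the cycle vertex `⟨i, 0⟩`. -/
abbrev CyclePathVertex (a : ZMod k → ℕ) : Type := Σ i : ZMod k, Fin (a i + 1)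

/-- One step down a pendant path, and one step around the cycle from a cycle vertex. -/
def descend (a : ZMod k → ℕ) : CyclePathVertex a → CyclePathVertex a
  | ⟨i, 0, _⟩ => ⟨i + 1, 0⟩
  | ⟨i, x + 1, hx⟩ => ⟨i, x, by omega⟩

/-- The `k`-cycle with a pendant path of `a i` vertices attached to its `i`-th vertex for each `i`,
for `2 < k`. -/
def cycleWithPaths (a : ZMod k → ℕ) : SimpleGraph (CyclePathVertex a) :=
  fromRel fun u v ↦ descend a u = v

variable {a : ZMod k → ℕ}

theorem cyclePathVertex_ext_iff {u v : CyclePathVertex a} :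
    u = v ↔ u.1 = v.1 ∧ (u.2 : ℕ) = v.2 := by
  obtain ⟨i, x⟩ := u
  obtain ⟨j, y⟩ := v
  rw [Sigma.mk.injEq]
  refine and_congr_right ?_
  rintro rfl
  rw [heq_eq_eq, Fin.ext_iff]

theorem descend_fst {v : CyclePathVertex a} (hv : (v.2 : ℕ) ≠ 0) : (descend a v).1 = v.1 := by
  rcases v with ⟨i, _ | x, hx⟩
  · exact absurd rfl hv
  · rfl

theorem cycleRetraction_descend (a : ZMod k → ℕ) :
    CycleRetraction (fun i ↦ (⟨i, 0⟩ : CyclePathVertex a)) (descend a) (fun v ↦ v.2) where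
  injective i j hij := congrArg Sigma.fst hij
  apply_cycle i := rfl
  height_eq_zero := by
    rintro ⟨i, x⟩
    simp [eq_comm]
  height_apply
    | ⟨_, 0, _⟩, h => absurd rfl h
    | ⟨_, _ + 1, _⟩, _ => rfl

theorem isFunctionalGraph_cycleWithPaths (hk : 2 < k) (a : ZMod k → ℕ) :
    IsFunctionalGraph (cycleWithPaths a) (descend a) := by
  have hne := (cycleRetraction_descend a).apply_apply_ne hk
  refine ⟨fun u v ↦ ?_, hne⟩
  rw [cycleWithPaths, fromRel_adj, and_iff_right_iff_imp]
  rintro (rfl | rfl) heq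
  · exact hne u (by rw [← heq, ← heq])
  · exact hne v (by rw [heq, heq])

/-- The distance in `cycleWithPaths a` between the vertices `⟨i, x⟩` and `⟨j, y⟩`. -/
def cyclePathDist (i : ZMod k) (x : ℕ) (j : ZMod k) (y : ℕ) : ℕ :=
  if i = j then Nat.dist x y else x + y + cycleNorm (i - j)

theorem cyclePathDist_self (i : ZMod k) (x y : ℕ) : cyclePathDist i x i y = Nat.dist x y :=
  if_pos rfl

theorem cyclePathDist_of_ne {i j : ZMod k} (h : i ≠ j) (x y : ℕ) :
    cyclePathDist i x j y = x + y + cycleNorm (i - j) :=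
  if_neg h

theorem cyclePathDist_zero_left (i j : ZMod k) (y : ℕ) :
    cyclePathDist i 0 j y = y + cycleNorm (i - j) := by
  rcases eq_or_ne i j with rfl | h
  · simp [cyclePathDist_self, Nat.dist]
  · rw [cyclePathDist_of_ne h, zero_add]

theorem cyclePathDist_zero_right (i j : ZMod k) (x : ℕ) :
    cyclePathDist i x j 0 = x + cycleNorm (i - j) := by
  rcases eq_or_ne i j with rfl | h
  · simp [cyclePathDist_self, Nat.dist]
  · rw [cyclePathDist_of_ne h, add_zero]

theorem cyclePathDist_eq_zero {u v : CyclePathVertex a} :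
    cyclePathDist u.1 u.2 v.1 v.2 = 0 ↔ u = v := by
  obtain ⟨i, x⟩ := u
  obtain ⟨j, y⟩ := v
  rcases eq_or_ne i j with rfl | h
  · rw [cyclePathDist_self, cyclePathVertex_ext_iff]
    exact ⟨fun h ↦ ⟨rfl, Nat.eq_of_dist_eq_zero h⟩, fun h ↦ Nat.dist_eq_zero h.2⟩
  · simp [cyclePathDist_of_ne h, h, sub_eq_zero]

theorem cyclePathDist_descend (hk : 2 < k) (u v : CyclePathVertex a) :
    cyclePathDist (descend a u).1 (descend a u).2 v.1 v.2 ≤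
        cyclePathDist u.1 u.2 v.1 v.2 + 1 ∧
      cyclePathDist u.1 u.2 v.1 v.2 ≤
        cyclePathDist (descend a u).1 (descend a u).2 v.1 v.2 + 1 := by
  rcases u with ⟨i, _ | x, hx⟩
  · have h := cycleNorm_add_one_le hk (i - v.1)
    have h' := cycleNorm_le_add_one hk (i - v.1)
    simp only [descend, Fin.val_zero, cyclePathDist_zero_left, add_sub_right_comm i 1]
    omega
  · rcases eq_or_ne i v.1 with rfl | h
    · simp only [descend, cyclePathDist_self, Nat.dist]
      omega
    · simp only [descend, cyclePathDist_of_ne h]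
      omega

theorem exists_adj_cyclePathDist_add_one_eq [NeZero k] (hk : 2 < k) {u v : CyclePathVertex a}
    (huv : cyclePathDist u.1 u.2 v.1 v.2 ≠ 0) :
    ∃ w, (cycleWithPaths a).Adj u w ∧
      cyclePathDist w.1 w.2 v.1 v.2 + 1 = cyclePathDist u.1 u.2 v.1 v.2 := by
  have adj_descend := (isFunctionalGraph_cycleWithPaths hk a).adj_apply
  obtain ⟨j, y, hy⟩ := v
  obtain ⟨i, x, hx⟩ := u
  by_cases hup : i = j ∧ x < y
  · obtain ⟨rfl, hxy⟩ := hup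
    refine ⟨⟨i, x + 1, by omega⟩, (adj_descend ⟨i, x + 1, by omega⟩).symm, ?_⟩
    simp only [cyclePathDist_self, Nat.dist]
    omega
  rcases x with _ | x
  · simp only [cyclePathDist_zero_left] at huv ⊢
    have hij : i - j ≠ 0 := fun h ↦ by
      have hnorm : cycleNorm (i - j) = 0 := cycleNorm_eq_zero.2 h
      exact hup ⟨sub_eq_zero.1 h, by omega⟩
    rcases exists_cycleNorm_add_one_eq hij with h | h
    · refine ⟨⟨i + 1, 0⟩, adj_descend _, ?_⟩
      rw [Fin.val_zero, cyclePathDist_zero_left, add_sub_right_comm]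
      omega
    · refine ⟨⟨i - 1, 0⟩, ?_, ?_⟩
      · convert (adj_descend ⟨i - 1, 0⟩).symm using 1
        change _ = (⟨i - 1 + 1, 0⟩ : CyclePathVertex a)
        rw [sub_add_cancel]
        rfl
      · rw [Fin.val_zero, cyclePathDist_zero_left, sub_right_comm]
        omega
  · refine ⟨_, adj_descend _, ?_⟩
    rcases eq_or_ne i j with rfl | h
    · have : y ≤ x + 1 := not_lt.1 fun hxy ↦ hup ⟨rfl, hxy⟩
      simp only [descend, cyclePathDist_self, Nat.dist] at huv ⊢
      omega
    · simp only [descend, cyclePathDist_of_ne h]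
      omega

theorem dist_cycleWithPaths [NeZero k] (hk : 2 < k) (u v : CyclePathVertex a) :
    (cycleWithPaths a).dist u v = cyclePathDist u.1 u.2 v.1 v.2 := by
  refine dist_eq_of_lipschitz_of_descent (f := fun u ↦ cyclePathDist u.1 u.2 v.1 v.2)
    (fun _ ↦ cyclePathDist_eq_zero) (fun u w huw ↦ ?_)
    (fun _ ↦ exists_adj_cyclePathDist_add_one_eq hk) u
  rcases ((isFunctionalGraph_cycleWithPaths hk a).adj_iff u w).1 huw with rfl | rfl
  · exact (cyclePathDist_descend hk u v).2
  · exact (cyclePathDist_descend hk w v).1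

theorem unicyclic_cycleWithPaths [NeZero k] (hk : 2 < k) (a : ZMod k → ℕ) :
    Unicyclic (cycleWithPaths a) := by
  refine (isFunctionalGraph_cycleWithPaths hk a).unicyclic
    { preconnected := fun u v ↦ ?_, nonempty := ⟨⟨0, 0⟩⟩ }
  obtain ⟨p, -⟩ := exists_walk_length_eq (f := fun u ↦ cyclePathDist u.1 u.2 v.1 v.2)
    (fun _ ↦ cyclePathDist_eq_zero.1) (fun _ ↦ exists_adj_cyclePathDist_add_one_eq hk) u
  exact p.reachable

theorem card_descend_fiber [NeZero k] (v : CyclePathVertex a) :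
    #{u : CyclePathVertex a | (u.2 : ℕ) ≠ 0 ∧ descend a u = v} =
      if (v.2 : ℕ) < a v.1 then 1 else 0 := by
  obtain ⟨i, x, hx⟩ := v
  split_ifs with hlt
  · refine card_eq_one.2 ⟨⟨i, x + 1, by simpa using hlt⟩, ?_⟩
    ext ⟨j, y, hy⟩
    rw [mem_filter_univ, mem_singleton, cyclePathVertex_ext_iff, cyclePathVertex_ext_iff]
    rcases y with _ | y <;> simp [descend]
  · refine card_eq_zero.2 (filter_eq_empty_iff.2 ?_)
    rintro ⟨j, _ | y, hy⟩ - ⟨hu, h⟩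
    · exact hu rfl
    · simp only [descend, cyclePathVertex_ext_iff] at h
      obtain ⟨rfl, rfl⟩ := h
      exact hlt (Nat.lt_of_succ_lt_succ hy)

theorem isCyclePath_cycleWithPaths [NeZero k] (hk : 2 < k) (a : ZMod k → ℕ) :
    IsCyclePath (cycleWithPaths a) := by
  refine ((cycleRetraction_descend a).isCyclePath_iff (isFunctionalGraph_cycleWithPaths hk a)
    hk).2 ⟨unicyclic_cycleWithPaths hk a, fun v ↦ ?_⟩
  rw [card_descend_fiber]
  split_ifs <;> omega

theorem card_branching_cycleWithPaths [NeZero k] (hk : 2 < k) (a : ZMod k → ℕ) :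
    Nat.card {v // OnCycle (cycleWithPaths a) v ∧ 3 ≤ deg (cycleWithPaths a) v} =
      #{i | 0 < a i} := by
  have h := cycleRetraction_descend a
  have hG := isFunctionalGraph_cycleWithPaths hk a
  rw [← card_map ⟨_, h.injective⟩]
  refine Nat.subtype_card _ fun v ↦ ?_
  rw [h.onCycle_iff hG hk, h.deg_eq hG, card_descend_fiber]
  obtain ⟨i, x⟩ := v
  simp only [mem_map, mem_filter_univ, Function.Embedding.coeFn_mk, cyclePathVertex_ext_iff]
  constructor
  · rintro ⟨j, hj, rfl, hx⟩
    simp [← hx, hj]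
  · rintro ⟨hx, h3⟩
    rw [if_pos hx, hx] at h3
    exact ⟨i, by grind, rfl, hx.symm⟩

end Model

section Evaluation

variable {k : ℕ} [NeZero k] {f : ℕ → ℝ}

/-- The sum of `f` over the distances from a vertex at height `m` to the vertices of a `k`-cycle. -/
noncomputable def cycleSum (f : ℕ → ℝ) (k : ℕ) [NeZero k] (m : ℕ) : ℝ :=
  ∑ z : ZMod k, f (m + cycleNorm z)

theorem sum_cycleNorm_sub_left (f : ℕ → ℝ) (m : ℕ) (j : ZMod k) :
    ∑ i, f (m + cycleNorm (i - j)) = cycleSum f k m :=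
  (Equiv.subRight j).sum_comp fun z ↦ f (m + cycleNorm z)

theorem sum_cycleNorm_sub_right (f : ℕ → ℝ) (m : ℕ) (i : ZMod k) :
    ∑ j, f (m + cycleNorm (i - j)) = cycleSum f k m :=
  (Equiv.subLeft i).sum_comp fun z ↦ f (m + cycleNorm z)

theorem cycleSum_succ_le (hf : Antitone f) (m : ℕ) :
    cycleSum f k (m + 1) ≤ cycleSum f k m - f m + f (m + k / 2 + 1) := by
  have hinj : Set.InjOn (Nat.cast : ℕ → ZMod k) (range (k / 2 + 1)) := fun r hr t ht hrt ↦ by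
    simp only [coe_range, Set.mem_Iio, Nat.lt_succ_iff] at hr ht
    rw [← cycleNorm_natCast hr, hrt, cycleNorm_natCast ht]
  have hdrop : f m - f (m + k / 2 + 1) ≤
      ∑ z : ZMod k, (f (m + cycleNorm z) - f (m + 1 + cycleNorm z)) := by
    calc f m - f (m + k / 2 + 1)
        = ∑ r ∈ range (k / 2 + 1), (f (m + r) - f (m + (r + 1))) :=
          (sum_range_sub' (fun r ↦ f (m + r)) (k / 2 + 1)).symm
      _ = ∑ z ∈ (range (k / 2 + 1)).image (Nat.cast : ℕ → ZMod k),
            (f (m + cycleNorm z) - f (m + 1 + cycleNorm z)) := by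
          rw [sum_image hinj]
          refine sum_congr rfl fun r hr ↦ ?_
          rw [cycleNorm_natCast (Nat.lt_succ_iff.1 (mem_range.1 hr)), add_assoc m 1, add_comm 1]
      _ ≤ _ := sum_le_univ_sum_of_nonneg fun z ↦ sub_nonneg.2 (hf (by omega))
  rw [sum_sub_distrib] at hdrop
  simp only [cycleSum]
  linarith

/-- The increment of the distance sum within a pendant path on extending it from `m` to `m + 1`
vertices. -/
noncomputable def pathSelfGain (f : ℕ → ℝ) (m : ℕ) : ℝ :=
  f 0 + f 1 + ∑ t ∈ range m, (2 * f (t + 1) + f t + f (t + 2))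

theorem sum_sum_dist_eq_sum_pathSelfGain (f : ℕ → ℝ) (b : ℕ) :
    ∑ y ∈ range b, ∑ x ∈ range b, (f (Nat.dist (x + 1) (y + 1)) + f (Nat.dist x (y + 1))) =
      ∑ m ∈ range b, pathSelfGain f m := by
  induction b with
  | zero => simp
  | succ m ih =>
    have hcol : ∑ x ∈ range m, (f (Nat.dist (x + 1) (m + 1)) + f (Nat.dist x (m + 1))) =
        ∑ t ∈ range m, (f (t + 1) + f (t + 2)) := by
      rw [← sum_range_reflect]
      refine sum_congr rfl fun t ht ↦ ?_
      have := mem_range.1 ht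
      simp only [Nat.dist]
      congr 2 <;> omega
    have hrow : ∑ y ∈ range m, (f (Nat.dist (m + 1) (y + 1)) + f (Nat.dist m (y + 1))) =
        ∑ t ∈ range m, (f (t + 1) + f t) := by
      rw [← sum_range_reflect]
      refine sum_congr rfl fun t ht ↦ ?_
      have := mem_range.1 ht
      simp only [Nat.dist]
      congr 2 <;> omega
    have hcorner : f (Nat.dist (m + 1) (m + 1)) + f (Nat.dist m (m + 1)) = f 0 + f 1 := by
      simp [Nat.dist]
    simp only [sum_range_succ _ m, sum_add_distrib (s := range m) (f := fun _ ↦ ∑ _ ∈ _, _), ih,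
      hcol, hrow, hcorner, pathSelfGain]
    simp only [sum_add_distrib, ← mul_sum]
    ring

/-- The increment of `degDistSum f` on extending a pendant path from `m` to `m + 1` vertices, when
all other pendant paths are empty. -/
noncomputable def pathGain (f : ℕ → ℝ) (k : ℕ) [NeZero k] (m : ℕ) : ℝ :=
  pathSelfGain f m + 3 * cycleSum f k (m + 1) + cycleSum f k m

theorem pathGain_succ_lt (hf : Antitone f) (hlt : ∀ n, f (n + 2) < f (n + 1)) (m : ℕ) :
    pathGain f k (m + 1) <
      pathGain f k m + 2 * (f (m + k / 2 + 1) + f (m + k / 2 + 2)) := by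
  have hself : pathSelfGain f (m + 1) = pathSelfGain f m + (2 * f (m + 1) + f m + f (m + 2)) := by
    rw [pathSelfGain, pathSelfGain, sum_range_succ, ← add_assoc]
  have hcycle := cycleSum_succ_le (k := k) hf m
  have hcycle' := cycleSum_succ_le (k := k) hf (m + 1)
  rw [show m + 1 + k / 2 + 1 = m + k / 2 + 2 by omega] at hcycle'
  have hle : f (m + k / 2 + 2) ≤ f (m + k / 2 + 1) := hf (Nat.le_succ _)
  rw [pathGain, pathGain, hself]
  linarith [hlt m]

variable {a : ZMod k → ℕ}

theorem sum_cyclePathVertex (F : ZMod k → ℕ → ℝ) :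
    ∑ v : CyclePathVertex a, F v.1 v.2 = ∑ i, (F i 0 + ∑ x ∈ range (a i), F i (x + 1)) := by
  rw [Fintype.sum_sigma]
  refine sum_congr rfl fun i _ ↦ ?_
  rw [Fin.sum_univ_eq_sum_range (F i), sum_range_succ', add_comm]

theorem sum_descend (F : ZMod k → ℕ → ℝ) :
    ∑ v : CyclePathVertex a, F (descend a v).1 (descend a v).2 =
      ∑ i, (F i 0 + ∑ x ∈ range (a i), F i x) := by
  rw [Fintype.sum_sigma, sum_add_distrib,
    ← Equiv.sum_comp (Equiv.addRight (1 : ZMod k)) fun i ↦ F i 0, ← sum_add_distrib]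
  refine sum_congr rfl fun i _ ↦ ?_
  rw [Fin.sum_univ_succ, ← Fin.sum_univ_eq_sum_range (F i)]
  rfl

/-- The contribution to `degDistSum f` of an ordered pair of pendant paths with `b` and `c` vertices
attached to cycle vertices at distance `r`. -/
noncomputable def crossSum (f : ℕ → ℝ) (r b c : ℕ) : ℝ :=
  ∑ x ∈ range b, ∑ y ∈ range c, (f (x + y + r + 1) + f (x + y + r + 2))

theorem sum_add_sum_descend (F : ZMod k → ℕ → ℝ) :
    ∑ v : CyclePathVertex a, (F v.1 v.2 + F (descend a v).1 (descend a v).2) =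
      ∑ i, (2 * F i 0 + ∑ x ∈ range (a i), (F i (x + 1) + F i x)) := by
  rw [sum_add_distrib, sum_cyclePathVertex, sum_descend, ← sum_add_distrib]
  refine sum_congr rfl fun i _ ↦ ?_
  rw [sum_add_distrib]
  ring

theorem degDistSum_cycleWithPaths_eq_sum (hk : 2 < k) (f : ℕ → ℝ) (a : ZMod k → ℕ) :
    degDistSum f (cycleWithPaths a) = ∑ w : CyclePathVertex a,
      (2 * cycleSum f k w.2 + ∑ i, ∑ x ∈ range (a i),
        (f (cyclePathDist i (x + 1) w.1 w.2) + f (cyclePathDist i x w.1 w.2))) := by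
  refine sum_congr rfl fun w _ ↦ ?_
  simp only [(isFunctionalGraph_cycleWithPaths hk a).sum_deg_mul, dist_cycleWithPaths hk]
  rw [sum_add_sum_descend fun i x ↦ f (cyclePathDist i x w.1 w.2), sum_add_distrib, ← mul_sum]
  simp only [cyclePathDist_zero_left, sum_cycleNorm_sub_left]

theorem sum_cycle_sum_paths (f : ℕ → ℝ) (a : ZMod k → ℕ) :
    ∑ j : ZMod k, ∑ i, ∑ x ∈ range (a i),
        (f (cyclePathDist i (x + 1) j 0) + f (cyclePathDist i x j 0)) =
      ∑ i, ∑ m ∈ range (a i), (cycleSum f k (m + 1) + cycleSum f k m) := by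
  rw [sum_comm]
  refine sum_congr rfl fun i _ ↦ ?_
  rw [sum_comm]
  refine sum_congr rfl fun x _ ↦ ?_
  simp only [cyclePathDist_zero_right, sum_add_distrib, sum_cycleNorm_sub_right]

theorem sum_paths_sum_paths (f : ℕ → ℝ) (a : ZMod k → ℕ) :
    ∑ j : ZMod k, ∑ y ∈ range (a j), ∑ i, ∑ x ∈ range (a i),
        (f (cyclePathDist i (x + 1) j (y + 1)) + f (cyclePathDist i x j (y + 1))) =
      ∑ i, ∑ m ∈ range (a i), pathSelfGain f m +
        ∑ p ∈ (univ : Finset (ZMod k)).offDiag,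
          crossSum f (cycleNorm (p.1 - p.2)) (a p.1) (a p.2) := by
  rw [sum_congr rfl fun j _ ↦ sum_comm, sum_sum_eq_sum_diag_add_sum_offDiag]
  congr 1
  · refine sum_congr rfl fun i _ ↦ ?_
    simp only [cyclePathDist_self, sum_sum_dist_eq_sum_pathSelfGain]
  · refine sum_congr rfl fun p hp ↦ sum_congr rfl fun y _ ↦ sum_congr rfl fun x _ ↦ ?_
    have hne : p.2 ≠ p.1 := (mem_offDiag.1 hp).2.2.symm
    rw [cyclePathDist_of_ne hne, cyclePathDist_of_ne hne, cycleNorm_sub_comm p.2, add_comm]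
    congr 2 <;> omega

theorem degDistSum_cycleWithPaths (hk : 2 < k) (f : ℕ → ℝ) (a : ZMod k → ℕ) :
    degDistSum f (cycleWithPaths a) =
      2 * k * cycleSum f k 0 + ∑ i, ∑ m ∈ range (a i), pathGain f k m +
        ∑ p ∈ (univ : Finset (ZMod k)).offDiag,
          crossSum f (cycleNorm (p.1 - p.2)) (a p.1) (a p.2) := by
  rw [degDistSum_cycleWithPaths_eq_sum hk, sum_cyclePathVertex fun j y ↦ 2 * cycleSum f k y +
    ∑ i, ∑ x ∈ range (a i), (f (cyclePathDist i (x + 1) j y) + f (cyclePathDist i x j y))]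
  have hcycle := sum_cycle_sum_paths f a
  have hpaths := sum_paths_sum_paths f a
  simp only [pathGain, sum_add_distrib, sum_const, card_univ, ZMod.card, nsmul_eq_mul, ← mul_sum]
    at hcycle hpaths ⊢
  linarith

theorem degDistSum_cycleWithPaths_single (hk : 2 < k) (f : ℕ → ℝ) (i : ZMod k) (n : ℕ) :
    degDistSum f (cycleWithPaths (Pi.single i n)) =
      2 * k * cycleSum f k 0 + ∑ m ∈ range n, pathGain f k m := by
  rw [degDistSum_cycleWithPaths hk, Fintype.sum_eq_single i, Pi.single_eq_same,
    sum_eq_zero (s := offDiag _), add_zero]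
  · intro p hp
    have hne : p.1 ≠ i ∨ p.2 ≠ i := by
      by_contra! h
      exact (mem_offDiag.1 hp).2.2 (h.1.trans h.2.symm)
    rcases hne with h | h <;> simp [crossSum, h]
  · intro j hj
    rw [Pi.single_eq_of_ne hj, range_zero, sum_empty]

theorem interaction_le_crossSum (hf : Antitone f) (z : ZMod k) (b c : ℕ) :
    interaction (fun m ↦ f (m + k / 2 + 1) + f (m + k / 2 + 2)) b c ≤
      crossSum f (cycleNorm z) b c := by
  have hz := cycleNorm_le_half z
  exact sum_le_sum fun x _ ↦ sum_le_sum fun y _ ↦ add_le_add (hf (by omega)) (hf (by omega))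

theorem degDistSum_single_lt (hk : 2 < k) (hf : Antitone f) (hlt : ∀ n, f (n + 2) < f (n + 1))
    {p q : ZMod k} (hpq : p ≠ q) (hp : 0 < a p) (hq : 0 < a q) (i : ZMod k) :
    degDistSum f (cycleWithPaths (Pi.single i (∑ j, a j))) < degDistSum f (cycleWithPaths a) := by
  have hδ : Antitone fun m ↦ f (m + k / 2 + 1) + f (m + k / 2 + 2) := fun m n hmn ↦
    add_le_add (hf (by omega)) (hf (by omega))
  have hstack := sum_range_sum_lt_of_step hδ (pathGain_succ_lt (k := k) hf hlt) hpq hp hq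
  have hcross := sum_le_sum fun r (_ : r ∈ (univ : Finset (ZMod k)).offDiag) ↦
    interaction_le_crossSum hf (r.1 - r.2) (a r.1) (a r.2)
  rw [degDistSum_cycleWithPaths_single hk, degDistSum_cycleWithPaths hk]
  linarith

theorem card_cyclePathVertex_single (a : ZMod k → ℕ) (i : ZMod k) :
    Fintype.card (CyclePathVertex (Pi.single i (∑ j, a j))) =
      Fintype.card (CyclePathVertex a) := by
  simp [Fintype.card_sigma, sum_add_distrib]

theorem HA_cycleWithPaths_single_lt (hk : 2 < k) (ha : 2 ≤ #{i | 0 < a i}) (i : ZMod k) :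
    HA (cycleWithPaths (Pi.single i (∑ j, a j))) < HA (cycleWithPaths a) := by
  obtain ⟨p, hp, q, hq, hpq⟩ := one_lt_card.1 ha
  rw [mem_filter_univ] at hp hq
  rw [(unicyclic_cycleWithPaths hk _).HA_eq, (unicyclic_cycleWithPaths hk a).HA_eq,
    card_cyclePathVertex_single]
  exact sub_lt_sub_right (degDistSum_single_lt hk invDist_antitone invDist_add_two_lt hpq hp hq i) _

theorem card_pos_single_sum (ha : 2 ≤ #{i | 0 < a i}) (i : ZMod k) :
    #{j | 0 < (Pi.single i (∑ l, a l) : ZMod k → ℕ) j} = 1 := by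
  obtain ⟨p, hp⟩ := card_pos.1 (two_pos.trans_le ha)
  have hsum : 0 < ∑ l, a l :=
    sum_pos' (fun _ _ ↦ Nat.zero_le _) ⟨p, mem_univ p, (mem_filter_univ p).1 hp⟩
  refine card_eq_one.2 ⟨i, ?_⟩
  ext j
  rcases eq_or_ne j i with rfl | hj <;> simp [*]

end Evaluation

section CyclePathStructure

variable {V : Type*} {G : SimpleGraph V}

theorem Unicyclic.exists_cycleRetraction [Fintype V] (hG : Unicyclic G) {v : V}
    (hv : OnCycle G v) :
    ∃ (k : ℕ) (c : ZMod k → V) (s : V → V) (H : V → ℕ),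
      2 < k ∧ CycleRetraction c s H ∧ IsFunctionalGraph G s := by
  obtain ⟨k, c, hk, hc, hadj⟩ := exists_injective_zmod_of_onCycle hv
  obtain ⟨H, hzero, hdesc⟩ := exists_height hG.1 (Set.range_nonempty c)
  have step (v : V) :
      ∃ u, G.Adj v u ∧ (∀ i, v = c i → u = c (i + 1)) ∧ (H v ≠ 0 → H u + 1 = H v) := by
    by_cases hv : H v = 0
    · obtain ⟨i, rfl⟩ := (hzero v).1 hv
      exact ⟨c (i + 1), hadj i, fun j hij ↦ by rw [hc hij], fun h ↦ absurd hv h⟩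
    · obtain ⟨u, hvu, hu⟩ := hdesc v hv
      exact ⟨u, hvu, fun i hi ↦ absurd ((hzero v).2 ⟨i, hi.symm⟩) hv, fun _ ↦ hu⟩
  choose s hs hs_cycle hs_height using step
  have h : CycleRetraction c s H := ⟨hc, fun i ↦ hs_cycle _ i rfl, hzero, hs_height⟩
  exact ⟨k, c, s, H, hk, h, isFunctionalGraph_of_card_edgeSet hs (h.apply_apply_ne hk) hG.2⟩

namespace CycleRetraction

variable {k : ℕ} {c : ZMod k → V} {s : V → V} {H : V → ℕ} {R : V → ZMod k}

theorem exists_root (h : CycleRetraction c s H) :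
    ∃ R : V → ZMod k, (∀ i, R (c i) = i) ∧ ∀ v, H v ≠ 0 → R (s v) = R v := by
  have reaches_cycle (v : V) : ∃ i, c i = s^[H v] v := by
    induction hn : H v generalizing v with
    | zero => exact (h.height_eq_zero v).1 hn
    | succ n ih =>
      have := h.height_apply v (by omega)
      exact ih (s v) (by omega)
  choose R hR using reaches_cycle
  refine ⟨R, fun i ↦ h.injective ?_, fun v hv ↦ h.injective ?_⟩
  · rw [hR, h.height_cycle, Function.iterate_zero_apply]
  · rw [hR, hR, ← h.height_apply v hv, Function.iterate_succ_apply]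

theorem eq_of_root_eq_of_height_eq (h : CycleRetraction c s H) (hRc : ∀ i, R (c i) = i)
    (hRs : ∀ v, H v ≠ 0 → R (s v) = R v)
    (hinj : ∀ u v, H u ≠ 0 → H v ≠ 0 → s u = s v → u = v) {u v : V} (hR : R u = R v)
    (hH : H u = H v) : u = v := by
  induction hn : H u generalizing u v with
  | zero =>
    obtain ⟨i, rfl⟩ := (h.height_eq_zero u).1 hn
    obtain ⟨j, rfl⟩ := (h.height_eq_zero v).1 (hH ▸ hn)
    rw [hRc, hRc] at hR
    rw [hR]
  | succ n ih =>
    have hu : H u ≠ 0 := by omega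
    have hv : H v ≠ 0 := by omega
    have hsu := h.height_apply u hu
    have hsv := h.height_apply v hv
    exact hinj u v hu hv (ih (by rw [hRs u hu, hRs v hv, hR]) (by omega) (by omega))

theorem exists_root_eq_height_eq (h : CycleRetraction c s H)
    (hRs : ∀ v, H v ≠ 0 → R (s v) = R v) (v : V) {m : ℕ} (hm : m ≤ H v) :
    ∃ u, R u = R v ∧ H u = m := by
  induction hm using Nat.decreasingInduction with
  | self => exact ⟨v, rfl, rfl⟩
  | of_succ m _ ih =>
    obtain ⟨u, hRu, hHu⟩ := ih
    have hu : H u ≠ 0 := by omega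
    have := h.height_apply u hu
    exact ⟨s u, (hRs u hu).trans hRu, by omega⟩

theorem exists_semiconj_descend [Finite V] (h : CycleRetraction c s H)
    (hinj : ∀ u v, H u ≠ 0 → H v ≠ 0 → s u = s v → u = v) :
    ∃ (a : ZMod k → ℕ) (e : V ≃ CyclePathVertex a), Function.Semiconj e s (descend a) := by
  classical
  have := Fintype.ofFinite V
  obtain ⟨R, hRc, hRs⟩ := h.exists_root
  let a (i : ZMod k) : ℕ := ({v | R v = i} : Finset V).sup H
  have height_le (v : V) : H v ≤ a (R v) := le_sup (f := H) (by simp)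
  have height_attained (i : ZMod k) : ∃ v, R v = i ∧ H v = a i := by
    obtain ⟨v, hv, hmax⟩ := exists_mem_eq_sup {v | R v = i} ⟨c i, by simp [hRc]⟩ H
    exact ⟨v, by simpa using hv, hmax.symm⟩
  let position (v : V) : CyclePathVertex a := ⟨R v, H v, Nat.lt_succ_of_le (height_le v)⟩
  have position_injective : Function.Injective position := fun u v huv ↦
    have ⟨hR, hH⟩ := cyclePathVertex_ext_iff.1 huv
    h.eq_of_root_eq_of_height_eq hRc hRs hinj hR hH
  have position_surjective : Function.Surjective position := by
    rintro ⟨i, x, hx⟩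
    obtain ⟨v, rfl, hv⟩ := height_attained i
    obtain ⟨u, hRu, hHu⟩ := h.exists_root_eq_height_eq hRs v (hv ▸ Nat.le_of_lt_succ hx)
    exact ⟨u, cyclePathVertex_ext_iff.2 ⟨hRu, hHu⟩⟩
  refine ⟨a, .ofBijective position ⟨position_injective, position_surjective⟩, fun v ↦ ?_⟩
  change position (s v) = descend a (position v)
  by_cases hv : H v = 0
  · obtain ⟨i, rfl⟩ := (h.height_eq_zero v).1 hv
    have position_cycle (j : ZMod k) : position (c j) = ⟨j, 0⟩ :=
      cyclePathVertex_ext_iff.2 ⟨hRc j, h.height_cycle j⟩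
    rw [h.apply_cycle, position_cycle, position_cycle]
    rfl
  · have hsv := h.height_apply v hv
    have hdescend := (cycleRetraction_descend a).height_apply (position v) hv
    have hroot : (descend a (position v)).1 = R v := descend_fst hv
    refine cyclePathVertex_ext_iff.2 ⟨(hRs v hv).trans hroot.symm, ?_⟩
    exact Nat.add_right_cancel (hsv.trans hdescend.symm)

end CycleRetraction

theorem IsCyclePath.exists_iso_cycleWithPaths [Fintype V] (hG : IsCyclePath G) {v : V}
    (hv : OnCycle G v) :
    ∃ (k : ℕ) (a : ZMod k → ℕ), 2 < k ∧ Nonempty (G ≃g cycleWithPaths a) := by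
  classical
  obtain ⟨k, c, s, H, hk, h, hGs⟩ := hG.1.exists_cycleRetraction hv
  have hfiber := ((h.isCyclePath_iff hGs hk).1 hG).2
  obtain ⟨a, e, he⟩ := h.exists_semiconj_descend fun u v hu hv huv ↦
    card_le_one.1 (hfiber (s v)) u (by simp [hu, huv]) v (by simp [hv])
  exact ⟨k, a, hk, ⟨hGs.isoOfSemiconj (isFunctionalGraph_cycleWithPaths hk a) e he⟩⟩

end CyclePathStructure

section Isomorphism

variable {V W : Type*} {G : SimpleGraph V} {G' : SimpleGraph W}

theorem dist_map_le (φ : G →g G') {u v : V} (huv : G.Reachable u v) :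
    G'.dist (φ u) (φ v) ≤ G.dist u v := by
  obtain ⟨p, hp⟩ := huv.exists_walk_length_eq_dist
  rw [← hp, ← p.length_map φ]
  exact dist_le _

theorem dist_iso_apply (φ : G ≃g G') (u v : V) : G'.dist (φ u) (φ v) = G.dist u v := by
  by_cases huv : G.Reachable u v
  · refine (dist_map_le φ.toHom huv).antisymm ?_
    simpa using dist_map_le φ.symm.toHom (φ.reachable_iff.2 huv)
  · rw [dist_eq_zero_of_not_reachable huv,
      dist_eq_zero_of_not_reachable (φ.reachable_iff.not.2 huv)]

theorem OnCycle.map {v : V} (hv : OnCycle G v) (φ : G →g G') (hφ : Function.Injective φ) :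
    OnCycle G' (φ v) :=
  have ⟨_, hp⟩ := hv
  ⟨_, (Walk.isCycle_map_iff_of_injective hφ).2 hp⟩

theorem onCycle_iso_apply_iff (φ : G ≃g G') (v : V) : OnCycle G' (φ v) ↔ OnCycle G v :=
  ⟨fun hv ↦ by simpa using hv.map φ.symm.toHom φ.symm.injective,
    fun hv ↦ hv.map φ.toHom φ.injective⟩

variable [Fintype V] [Fintype W]

theorem deg_iso_apply (φ : G ≃g G') (v : V) : deg G' (φ v) = deg G v :=
  (Nat.card_congr (φ.mapNeighborSet v)).symm

theorem HA_eq_of_iso (φ : G ≃g G') : HA G = HA G' := by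
  classical
  simp only [HA, ← φ.toEquiv.sum_comp, RelIso.coe_fn_toEquiv, deg_iso_apply, dist_iso_apply,
    φ.injective.eq_iff]

theorem Unicyclic.of_iso (φ : G ≃g G') (hG : Unicyclic G) : Unicyclic G' := by
  refine ⟨φ.connected_iff.1 hG.1, ?_⟩
  rw [← Nat.card_congr φ.mapEdgeSet, hG.2, Fintype.card_congr φ.toEquiv]

theorem IsCyclePath.of_iso (φ : G ≃g G') (hG : IsCyclePath G) : IsCyclePath G' := by
  refine ⟨hG.1.of_iso φ, φ.surjective.forall.2 fun v ↦ ?_⟩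
  rw [onCycle_iso_apply_iff, deg_iso_apply]
  exact hG.2 v

theorem card_branching_eq_of_iso (φ : G ≃g G') :
    Nat.card {v // OnCycle G v ∧ 3 ≤ deg G v} = Nat.card {v // OnCycle G' v ∧ 3 ≤ deg G' v} :=
  Nat.card_congr <| φ.toEquiv.subtypeEquiv fun v ↦
    (and_congr (onCycle_iso_apply_iff φ v) (by rw [← deg_iso_apply φ]; rfl)).symm

end Isomorphism

theorem stmt16_general {V : Type*} [Fintype V] (G : SimpleGraph V) (hG : IsCyclePath G)
    (h : 2 ≤ Nat.card {v // OnCycle G v ∧ 3 ≤ deg G v}) :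
    ∃ G' : SimpleGraph V, IsCyclePath G' ∧
      Nat.card {v // OnCycle G' v ∧ 3 ≤ deg G' v} = 1 ∧ HA G > HA G' := by
  obtain ⟨⟨v, hv, -⟩⟩ := (Nat.card_pos_iff.1 (two_pos.trans_le h)).1
  obtain ⟨k, a, hk, ⟨φ⟩⟩ := hG.exists_iso_cycleWithPaths hv
  have : NeZero k := ⟨by omega⟩
  rw [card_branching_eq_of_iso φ, card_branching_cycleWithPaths hk] at h
  have hcard := card_cyclePathVertex_single a 0
  have hbranch := card_pos_single_sum h 0
  have hlt := HA_cycleWithPaths_single_lt hk h 0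
  set b : ZMod k → ℕ := Pi.single 0 (∑ i, a i)
  obtain ⟨e⟩ := Fintype.card_eq.1 ((Fintype.card_congr φ.toEquiv).trans hcard.symm)
  let ψ : (cycleWithPaths b).comap e ≃g cycleWithPaths b := .comap e _
  refine ⟨_, (isCyclePath_cycleWithPaths hk b).of_iso ψ.symm, ?_, ?_⟩
  · rw [card_branching_eq_of_iso ψ, card_branching_cycleWithPaths hk, hbranch]
  · rwa [HA_eq_of_iso φ, HA_eq_of_iso ψ]

theorem stmt16 (n : ℕ) (G : SimpleGraph (Fin n)) (hG : IsCyclePath G)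
    (h : 2 ≤ Nat.card {v // OnCycle G v ∧ 3 ≤ deg G v}) :
    ∃ G' : SimpleGraph (Fin n), IsCyclePath G' ∧
      Nat.card {v // OnCycle G' v ∧ 3 ≤ deg G' v} = 1 ∧ HA G > HA G' :=
  stmt16_general G hG h
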